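/- Let H be a real Hilbert space, T > 0, and let u, w : ℝ → H be continuously differentiable on [0,T] with derivatives u', w'. Let φ : ℝ → ℝ be continuously differentiable on [0,T] with φ(0) = 0, φ(T) = 1 and |φ(τ)| ≤ 1 for all τ ∈ [0,T]. Then for every t ∈ [0,T]: ⟪u(t), w(t)⟫ ≤ (sup_{τ∈[0,T]} |φ'(τ)|)·(∫₀ᵀ ‖u(τ)‖² dτ)^{1/2}·(∫₀ᵀ ‖w(τ)‖² dτ)^{1/2} + 2·∫₀ᵀ ‖u'(τ)‖·‖w(τ)‖ dτ + 2·∫₀ᵀ ‖u(τ)‖·‖w'(τ)‖ dτ. -/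

import Mathlib

open scoped RealInnerProductSpace

theorem aux_cs (T : ℝ) (hT : 0 < T) (a b : ℝ → ℝ)
    (ha : ContinuousOn a (Set.Icc 0 T)) (hb : ContinuousOn b (Set.Icc 0 T)) :
    (∫ τ in (0 : ℝ)..T, a τ * b τ) ≤
      Real.sqrt (∫ τ in (0 : ℝ)..T, a τ ^ 2) * Real.sqrt (∫ τ in (0 : ℝ)..T, b τ ^ 2) := by
  have hI : ∀ f : ℝ → ℝ, ContinuousOn f (Set.Icc 0 T) →
      IntervalIntegrable f MeasureTheory.volume 0 T := fun f hf =>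
    ContinuousOn.intervalIntegrable (by rwa [Set.uIcc_of_le hT.le])
  have ia := hI (fun τ => a τ ^ 2) (ha.pow 2)
  have ib := hI (fun τ => b τ ^ 2) (hb.pow 2)
  have iab := hI (fun τ => a τ * b τ) (ha.mul hb)
  have key : ∀ x : ℝ, 0 ≤ (∫ τ in (0 : ℝ)..T, a τ ^ 2) * (x * x)
      + (2 * ∫ τ in (0 : ℝ)..T, a τ * b τ) * x + ∫ τ in (0 : ℝ)..T, b τ ^ 2 := by
    intro x
    have h : 0 ≤ ∫ τ in (0 : ℝ)..T, ((x * x) * a τ ^ 2 + (2 * x) * (a τ * b τ) + b τ ^ 2) := by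
      apply intervalIntegral.integral_nonneg hT.le
      intro τ _
      nlinarith [sq_nonneg (x * a τ + b τ)]
    rw [intervalIntegral.integral_add ((ia.const_mul _).add (iab.const_mul _)) ib,
      intervalIntegral.integral_add (ia.const_mul _) (iab.const_mul _),
      intervalIntegral.integral_const_mul, intervalIntegral.integral_const_mul] at h
    linarith
  have hd := discrim_le_zero key
  unfold discrim at hd
  have hpos : 0 ≤ ∫ τ in (0 : ℝ)..T, a τ ^ 2 :=
    intervalIntegral.integral_nonneg hT.le (fun τ _ => sq_nonneg _)
  rw [← Real.sqrt_mul hpos]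
  apply Real.le_sqrt_of_sq_le
  nlinarith

/-- Pointwise estimate of the inner product of two curves by integral norms of
the curves and their derivatives. -/
theorem pointwise_inner_product_estimate
    {H : Type*} [NormedAddCommGroup H] [InnerProductSpace ℝ H] [CompleteSpace H]
    (T : ℝ) (hT : 0 < T) (u w u' w' : ℝ → H)
    (hu : ∀ τ ∈ Set.Icc (0 : ℝ) T, HasDerivAt u (u' τ) τ)
    (hu' : ContinuousOn u' (Set.Icc 0 T))
    (hw : ∀ τ ∈ Set.Icc (0 : ℝ) T, HasDerivAt w (w' τ) τ)
    (hw' : ContinuousOn w' (Set.Icc 0 T))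
    (φ φ' : ℝ → ℝ)
    (hφ : ∀ τ ∈ Set.Icc (0 : ℝ) T, HasDerivAt φ (φ' τ) τ)
    (hφ' : ContinuousOn φ' (Set.Icc 0 T))
    (hφ0 : φ 0 = 0) (hφT : φ T = 1)
    (hφbdd : ∀ τ ∈ Set.Icc (0 : ℝ) T, |φ τ| ≤ 1) :
    ∀ t ∈ Set.Icc (0 : ℝ) T,
      ⟪u t, w t⟫ ≤
        (⨆ τ : Set.Icc (0 : ℝ) T, |φ' τ.1|) *
            (Real.sqrt (∫ τ in (0 : ℝ)..T, ‖u τ‖ ^ 2) *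
              Real.sqrt (∫ τ in (0 : ℝ)..T, ‖w τ‖ ^ 2))
        + 2 * (∫ τ in (0 : ℝ)..T, ‖u' τ‖ * ‖w τ‖)
        + 2 * (∫ τ in (0 : ℝ)..T, ‖u τ‖ * ‖w' τ‖) := by
  intro t ht
  have hI : ∀ s ∈ Set.Icc (0 : ℝ) T, ∀ f : ℝ → ℝ, ContinuousOn f (Set.Icc 0 T) →
      IntervalIntegrable f MeasureTheory.volume s T := fun s hs f hf =>
    ContinuousOn.intervalIntegrable
      (by rw [Set.uIcc_of_le hs.2]; exact hf.mono (Set.Icc_subset_Icc_left hs.1))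
  have h0 : (0 : ℝ) ∈ Set.Icc (0 : ℝ) T := ⟨le_rfl, hT.le⟩
  have cu : ContinuousOn u (Set.Icc 0 T) := fun x hx => (hu x hx).continuousAt.continuousWithinAt
  have cw : ContinuousOn w (Set.Icc 0 T) := fun x hx => (hw x hx).continuousAt.continuousWithinAt
  have cφ : ContinuousOn φ (Set.Icc 0 T) := fun x hx => (hφ x hx).continuousAt.continuousWithinAt
  set M := ⨆ τ : Set.Icc (0 : ℝ) T, |φ' τ.1| with hM
  have hbdd : BddAbove (Set.range fun τ : Set.Icc (0 : ℝ) T => |φ' τ.1|) := by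
    have := (isCompact_Icc.image_of_continuousOn hφ'.abs).bddAbove
    rwa [Set.image_eq_range] at this
  have hMle : ∀ τ ∈ Set.Icc (0 : ℝ) T, |φ' τ| ≤ M := fun τ hτ => le_ciSup hbdd ⟨τ, hτ⟩
  have hM0 : 0 ≤ M := (abs_nonneg _).trans (hMle 0 h0)
  have cg : ContinuousOn (fun τ => ⟪u τ, w τ⟫) (Set.Icc 0 T) := cu.inner (𝕜 := ℝ) cw
  have cg' : ContinuousOn (fun τ => ⟪u τ, w' τ⟫ + ⟪u' τ, w τ⟫) (Set.Icc 0 T) :=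
    (cu.inner (𝕜 := ℝ) hw').add (hu'.inner (𝕜 := ℝ) cw)
  have dg : ∀ τ ∈ Set.Icc (0 : ℝ) T,
      HasDerivAt (fun τ => ⟪u τ, w τ⟫) (⟪u τ, w' τ⟫ + ⟪u' τ, w τ⟫) τ :=
    fun τ hτ => (hu τ hτ).inner ℝ (hw τ hτ)
  have cF1 : ContinuousOn (fun τ => ‖u' τ‖ * ‖w τ‖) (Set.Icc 0 T) := hu'.norm.mul cw.norm
  have cF2 : ContinuousOn (fun τ => ‖u τ‖ * ‖w' τ‖) (Set.Icc 0 T) := cu.norm.mul hw'.norm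
  have cA : ContinuousOn (fun τ => ‖u τ‖ * ‖w τ‖) (Set.Icc 0 T) := cu.norm.mul cw.norm
  have cF : ContinuousOn (fun τ => ‖u' τ‖ * ‖w τ‖ + ‖u τ‖ * ‖w' τ‖) (Set.Icc 0 T) := cF1.add cF2
  have hgF : ∀ τ, |⟪u τ, w' τ⟫ + ⟪u' τ, w τ⟫| ≤ ‖u' τ‖ * ‖w τ‖ + ‖u τ‖ * ‖w' τ‖ := by
    intro τ
    have h1 := abs_real_inner_le_norm (u τ) (w' τ)
    have h2 := abs_real_inner_le_norm (u' τ) (w τ)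
    have h3 := abs_add_le ⟪u τ, w' τ⟫ ⟪u' τ, w τ⟫
    linarith
  have e1 : ∫ τ in (0 : ℝ)..T, (φ' τ * ⟪u τ, w τ⟫ + φ τ * (⟪u τ, w' τ⟫ + ⟪u' τ, w τ⟫))
      = φ T * ⟪u T, w T⟫ - φ 0 * ⟪u 0, w 0⟫ := by
    apply intervalIntegral.integral_eq_sub_of_hasDerivAt (f := fun τ => φ τ * ⟪u τ, w τ⟫)
    · intro τ hτ
      rw [Set.uIcc_of_le hT.le] at hτ
      exact (hφ τ hτ).mul (dg τ hτ)
    · exact hI 0 h0 _ ((hφ'.mul cg).add (cφ.mul cg'))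
  have e2 : ∫ τ in t..T, (⟪u τ, w' τ⟫ + ⟪u' τ, w τ⟫) = ⟪u T, w T⟫ - ⟪u t, w t⟫ := by
    apply intervalIntegral.integral_eq_sub_of_hasDerivAt (f := fun τ => ⟪u τ, w τ⟫)
    · intro τ hτ
      rw [Set.uIcc_of_le ht.2] at hτ
      exact dg τ ⟨ht.1.trans hτ.1, hτ.2⟩
    · exact hI t ht _ cg'
  have b1 : ∫ τ in (0 : ℝ)..T, (φ' τ * ⟪u τ, w τ⟫ + φ τ * (⟪u τ, w' τ⟫ + ⟪u' τ, w τ⟫))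
      ≤ ∫ τ in (0 : ℝ)..T, (M * (‖u τ‖ * ‖w τ‖) + (‖u' τ‖ * ‖w τ‖ + ‖u τ‖ * ‖w' τ‖)) := by
    apply intervalIntegral.integral_mono_on hT.le
    · exact hI 0 h0 _ ((hφ'.mul cg).add (cφ.mul cg'))
    · exact hI 0 h0 _ ((continuousOn_const.mul cA).add cF)
    · intro τ hτ
      apply add_le_add
      · refine (le_abs_self _).trans ?_
        rw [abs_mul]
        exact mul_le_mul (hMle τ hτ) (abs_real_inner_le_norm _ _) (abs_nonneg _) hM0
      · refine (le_abs_self _).trans ?_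
        rw [abs_mul]
        exact (mul_le_of_le_one_left (abs_nonneg _) (hφbdd τ hτ)).trans (hgF τ)
  have b2 : ∫ τ in t..T, -(‖u' τ‖ * ‖w τ‖ + ‖u τ‖ * ‖w' τ‖)
      ≤ ∫ τ in t..T, (⟪u τ, w' τ⟫ + ⟪u' τ, w τ⟫) := by
    apply intervalIntegral.integral_mono_on ht.2
    · exact hI t ht _ cF.neg
    · exact hI t ht _ cg'
    · intro τ _
      exact (abs_le.1 (hgF τ)).1
  have b3 : ∫ τ in t..T, (‖u' τ‖ * ‖w τ‖ + ‖u τ‖ * ‖w' τ‖)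
      ≤ ∫ τ in (0 : ℝ)..T, (‖u' τ‖ * ‖w τ‖ + ‖u τ‖ * ‖w' τ‖) := by
    apply intervalIntegral.integral_mono_interval ht.1 ht.2 le_rfl
    · exact Filter.Eventually.of_forall fun τ => by simp only [Pi.zero_apply]; positivity
    · exact hI 0 h0 _ cF
  rw [intervalIntegral.integral_neg] at b2
  rw [intervalIntegral.integral_add ((hI 0 h0 _ cA).const_mul M) (hI 0 h0 _ cF),
    intervalIntegral.integral_const_mul] at b1
  rw [intervalIntegral.integral_add (hI 0 h0 _ cF1) (hI 0 h0 _ cF2)] at b1 b3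
  have cs := mul_le_mul_of_nonneg_left (aux_cs T hT _ _ cu.norm cw.norm) hM0
  rw [hφ0, hφT] at e1
  linarith
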